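/- Let (Fₙ) be the Fibonacci sequence with F₁ = F₂ = 1 and F_{n+2} = F_{n+1} + F_n. Then the sequence aₙ = 3^{Fₙ} / 2^{F_{n+1}} converges to 0 as n → ∞. -/

import Mathlib

/-!
Since `F (n + 1) = φ * F n + ψ ^ n`, for `b > 0` the quotient `a ^ F n / b ^ F (n + 1)` equals
`(a / b ^ φ) ^ F n / b ^ (ψ ^ n)`. The denominator tends to `b ^ 0 = 1` because `|ψ| < 1`, so
the limit is governed by the powers of `a / b ^ φ`. For `a = 3` and `b = 2` this ratio is less
than one: `3 ^ 5 < 2 ^ 8` gives `3 < 2 ^ (8 / 5)`, and `8 / 5 < φ`.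
-/

open Filter

section

open Real Topology
open scoped goldenRatio

theorem tendsto_fib_atTop : Tendsto Nat.fib atTop atTop :=
  (tendsto_add_atTop_iff_nat 2).1 Nat.fib_add_two_strictMono.tendsto_atTop

theorem tendsto_goldenConj_pow_atTop_nhds_zero : Tendsto (fun n : ℕ => ψ ^ n) atTop (𝓝 0) :=
  tendsto_pow_atTop_nhds_zero_of_abs_lt_one <|
    abs_lt.2 ⟨neg_one_lt_goldenConj, goldenConj_neg.trans one_pos⟩

theorem pow_fib_succ_eq_rpow_goldenRatio_pow_mul {b : ℝ} (hb : 0 < b) (n : ℕ) :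
    b ^ Nat.fib (n + 1) = (b ^ φ) ^ Nat.fib n * b ^ (ψ ^ n) := by
  have hfib : (Nat.fib (n + 1) : ℝ) = φ * Nat.fib n + ψ ^ n := by
    linarith [fib_succ_sub_goldenRatio_mul_fib n]
  rw [← rpow_natCast b, hfib, rpow_add hb, rpow_mul_natCast hb.le]

theorem pow_fib_div_pow_fib_succ_eq (a : ℝ) {b : ℝ} (hb : 0 < b) (n : ℕ) :
    a ^ Nat.fib n / b ^ Nat.fib (n + 1) = (a / b ^ φ) ^ Nat.fib n / b ^ (ψ ^ n) := by
  rw [pow_fib_succ_eq_rpow_goldenRatio_pow_mul hb, div_pow a, div_mul_eq_div_div]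

theorem tendsto_pow_fib_div_pow_fib_succ_of_abs_lt {a b : ℝ} (hb : 0 < b) (hab : |a| < b ^ φ) :
    Tendsto (fun n : ℕ => a ^ Nat.fib n / b ^ Nat.fib (n + 1)) atTop (𝓝 0) := by
  have hratio : |a / b ^ φ| < 1 := by
    rwa [abs_div, abs_of_pos (rpow_pos_of_pos hb φ), div_lt_one (rpow_pos_of_pos hb φ)]
  have hnum : Tendsto (fun n : ℕ => (a / b ^ φ) ^ Nat.fib n) atTop (𝓝 0) :=
    (tendsto_pow_atTop_nhds_zero_of_abs_lt_one hratio).comp tendsto_fib_atTop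
  have hden : Tendsto (fun n : ℕ => b ^ (ψ ^ n)) atTop (𝓝 1) := by
    simpa only [rpow_zero] using
      tendsto_const_nhds.rpow tendsto_goldenConj_pow_atTop_nhds_zero (.inl hb.ne')
  simpa only [pow_fib_div_pow_fib_succ_eq a hb, Pi.div_def, zero_div]
    using hnum.div hden one_ne_zero

theorem eight_fifths_lt_goldenRatio : 8 / 5 < φ := by
  have hsqrt : 11 / 5 < √5 := lt_sqrt_of_sq_lt (by norm_num)
  rw [goldenRatio]
  linarith

theorem three_lt_two_rpow_goldenRatio : (3 : ℝ) < 2 ^ φ := by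
  have hpow : (3 : ℝ) ^ 5 < ((2 : ℝ) ^ (8 / 5 : ℝ)) ^ 5 := by
    rw [← rpow_mul_natCast zero_le_two]
    norm_num
  calc (3 : ℝ) < 2 ^ (8 / 5 : ℝ) := lt_of_pow_lt_pow_left₀ 5 (by positivity) hpow
    _ < 2 ^ φ := rpow_lt_rpow_of_exponent_lt one_lt_two eight_fifths_lt_goldenRatio

end

/-- The sequence aₙ = 3^{Fₙ} / 2^{F_{n+1}} tends to 0. -/
theorem tendsto_three_pow_fib_div_two_pow_fib_succ :
    Tendsto (fun n : ℕ => (3 : ℝ) ^ (Nat.fib n) / (2 : ℝ) ^ (Nat.fib (n + 1)))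
      atTop (nhds 0) :=
  tendsto_pow_fib_div_pow_fib_succ_of_abs_lt two_pos <| by
    simpa using three_lt_two_rpow_goldenRatio
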